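/- arXiv:1611.01818 — 2 statements merged into one kernel-verified Lean document; each statement's English description precedes it below -/
import Mathlib

section
/- Let G be a simple graph on a finite vertex set containing at least one edge. Then α₀(G) = 1/2 if and only if G has a connected component whose induced subgraph is bipartite and contains at least one edge. -/
/-!
Write `S x = ∑ dᵢ xᵢ²` and let `R x = ∑_{ij edge} (xᵢ + xⱼ)²` be the signless Laplacian form. Then
`xᵀ A_α x = (2α - 1) S x + (1 - α) R x`, so `A_α` is positive semidefinite for every `α ∈ [1/2, 1]`
and always `α₀ ≤ 1/2`.

If some component with an edge is bipartite, the vector that is `±1` on its two colour classes and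
`0` elsewhere has `R x = 0` and `S x > 0`, so `A_α` is not positive semidefinite for `α < 1/2`.

Otherwise every non-isolated vertex `v` lies on a closed walk of odd length `ℓ`. Along a walk the
value of `x` flips its sign at every step up to an error `√(2 R x)`, so `2 |x_v| ≤ ℓ √(2 R x)`.
Summing over `v` gives `S ≤ K R` for a constant `K`, and then `A_α` is positive semidefinite for
some `α < 1/2`.
-/

open Matrix SimpleGraph

/-- Adjacency matrix of `G` over `ℝ`. -/
noncomputable def adjM {V : Type*} [Fintype V] (G : SimpleGraph V) : Matrix V V ℝ := by
  classical exact G.adjMatrix ℝ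

/-- Diagonal matrix of vertex degrees of `G`, over `ℝ`. -/
noncomputable def degM {V : Type*} [Fintype V] (G : SimpleGraph V) : Matrix V V ℝ := by
  classical exact Matrix.diagonal fun v => (G.degree v : ℝ)

/-- `A_α(G) = α·D(G) + (1-α)·A(G)`. -/
noncomputable def Amix {V : Type*} [Fintype V] (G : SimpleGraph V) (α : ℝ) : Matrix V V ℝ :=
  α • degM G + (1 - α) • adjM G

/-- Smallest eigenvalue of a real symmetric matrix (junk value `0` otherwise). -/
noncomputable def lambdaMin {n : Type*} [Fintype n] (M : Matrix n n ℝ) : ℝ := by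
  classical exact if h : M.IsHermitian then ⨅ i, h.eigenvalues i else 0

/-- Largest eigenvalue of a real symmetric matrix (junk value `0` otherwise). -/
noncomputable def lambdaMax {n : Type*} [Fintype n] (M : Matrix n n ℝ) : ℝ := by
  classical exact if h : M.IsHermitian then ⨆ i, h.eigenvalues i else 0

/-- `α₀(G)`: the smallest `α ∈ [0,1]` such that `A_α(G)` is positive semidefinite. -/
noncomputable def alpha0 {V : Type*} [Fintype V] (G : SimpleGraph V) : ℝ :=
  sInf {α : ℝ | α ∈ Set.Icc (0:ℝ) 1 ∧ (Amix G α).PosSemidef}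

/-- The quadratic form `∑ dᵢ xᵢ²` of the degree matrix. -/
noncomputable def degForm {V : Type*} [Fintype V] (G : SimpleGraph V) (x : V → ℝ) : ℝ := by
  classical exact ∑ i, (G.degree i : ℝ) * x i ^ 2

/-- The quadratic form of the signless Laplacian `D + A`: the sum of `(xᵢ + xⱼ)²` over the edges,
written as half of the sum over ordered adjacent pairs. -/
noncomputable def signlessForm {V : Type*} [Fintype V] (G : SimpleGraph V) (x : V → ℝ) : ℝ := by
  classical exact (∑ i, ∑ j, if G.Adj i j then (x i + x j) ^ 2 else 0) / 2

section

variable {V : Type*} [Fintype V] (G : SimpleGraph V)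

lemma degForm_nonneg (x : V → ℝ) : 0 ≤ degForm G x := by
  unfold degForm; positivity

lemma signlessForm_nonneg (x : V → ℝ) : 0 ≤ signlessForm G x := by
  unfold signlessForm; positivity

lemma dotProduct_Amix (α : ℝ) (x : V → ℝ) :
    x ⬝ᵥ (Amix G α *ᵥ x) = (2 * α - 1) * degForm G x + (1 - α) * signlessForm G x := by
  classical
  have hD : x ⬝ᵥ (degM G *ᵥ x) = degForm G x := by
    simp only [degM, degForm, dotProduct, mulVec_diagonal]
    refine Finset.sum_congr rfl fun i _ => ?_
    ring
  have hA : x ⬝ᵥ (adjM G *ᵥ x) = ∑ i, ∑ j, if G.Adj i j then x i * x j else 0 := by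
    rw [adjM]
    convert dotProduct_mulVec_adjMatrix (G := G) x x
  have h1 : degForm G x = ∑ i, ∑ j, if G.Adj i j then x i ^ 2 else 0 := by
    unfold degForm
    refine Finset.sum_congr rfl fun i _ => ?_
    rw [degree_eq_sum_if_adj, Finset.sum_mul]
    refine Finset.sum_congr rfl fun j _ => ?_
    split_ifs <;> simp_all
  have h2 : degForm G x = ∑ i, ∑ j, if G.Adj i j then x j ^ 2 else 0 := by
    rw [h1, Finset.sum_comm]
    simp_rw [G.adj_comm]
  have hR : 2 * signlessForm G x = degForm G x + degForm G x
      + 2 * ∑ i, ∑ j, if G.Adj i j then x i * x j else 0 := by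
    nth_rewrite 1 [h1]
    rw [h2, signlessForm]
    simp_rw [Finset.mul_sum, ← Finset.sum_add_distrib]
    rw [mul_div_cancel₀ _ (two_ne_zero)]
    refine Finset.sum_congr rfl fun i _ => Finset.sum_congr rfl fun j _ => ?_
    split_ifs
    · ring
    · simp
  rw [Amix, add_mulVec, smul_mulVec, smul_mulVec, dotProduct_add, dotProduct_smul,
    dotProduct_smul, hD, hA, smul_eq_mul, smul_eq_mul]
  linear_combination (-(1 - α) / 2) * hR

lemma posSemidef_Amix_iff (α : ℝ) : (Amix G α).PosSemidef ↔
    ∀ x, 0 ≤ (2 * α - 1) * degForm G x + (1 - α) * signlessForm G x := by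
  classical
  rw [posSemidef_iff_dotProduct_mulVec]
  simp only [star_trivial, dotProduct_Amix]
  refine and_iff_right ?_
  have hD : (degM G).IsSymm := isSymm_diagonal _
  have hA : (adjM G).IsSymm := isSymm_adjMatrix _
  rw [IsHermitian, conjTranspose_eq_transpose_of_trivial]
  exact (hD.smul α).add (hA.smul (1 - α))

lemma abs_add_le_of_adj (x : V → ℝ) {i j : V} (h : G.Adj i j) :
    |x i + x j| ≤ √(2 * signlessForm G x) := by
  classical
  refine Real.abs_le_sqrt ?_
  rw [signlessForm, mul_div_cancel₀ _ (two_ne_zero)]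
  have h1 : (x i + x j) ^ 2 ≤ ∑ b, if G.Adj i b then (x i + x b) ^ 2 else 0 := by
    refine le_trans ?_ (Finset.single_le_sum (f := fun b => if G.Adj i b then (x i + x b) ^ 2 else 0)
      (fun b _ => by positivity) (Finset.mem_univ j))
    simp [h]
  refine h1.trans ?_
  convert Finset.single_le_sum
    (f := fun a => ∑ b, if G.Adj a b then (x a + x b) ^ 2 else 0)
    (fun a _ => by positivity) (Finset.mem_univ i)

/-- Each step of a walk flips the sign of `x` up to an error `√(2 R x)`. -/
lemma abs_sub_le_of_walk (x : V → ℝ) {u v : V} (w : G.Walk u v) :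
    |x u - (-1) ^ w.length * x v| ≤ w.length * √(2 * signlessForm G x) := by
  induction w with
  | nil => simp
  | @cons a b c h p ih =>
    have h1 := abs_add_le_of_adj G x h
    have h2 : x a - (-1) ^ (p.length + 1) * x c
        = (x a + x b) - (x b - (-1) ^ p.length * x c) := by ring
    rw [Walk.length_cons, h2]
    push_cast
    have h3 := abs_sub (x a + x b) (x b - (-1) ^ p.length * x c)
    linarith

lemma sq_le_of_odd_walk (x : V → ℝ) {v : V} (w : G.Walk v v) (hw : Odd w.length) :
    x v ^ 2 ≤ w.length ^ 2 * signlessForm G x := by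
  have h := abs_sub_le_of_walk G x w
  rw [hw.neg_one_pow] at h
  have h2 := sq_le_sq' (by linarith [neg_abs_le (x v - -1 * x v)]) ((le_abs_self _).trans h)
  rw [mul_pow, Real.sq_sqrt (by linarith [signlessForm_nonneg G x])] at h2
  have h3 := mul_nonneg (sq_nonneg (w.length : ℝ)) (signlessForm_nonneg G x)
  nlinarith

/-- A non-bipartite component has an odd closed walk, which can be rerouted through any of its
vertices. -/
lemma exists_odd_walk (v : V)
    (h : ¬ (G.induce (G.connectedComponentMk v).supp).Colorable 2) :
    ∃ w : G.Walk v v, Odd w.length := by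
  rw [two_colorable_iff_forall_loop_even] at h
  push Not at h
  obtain ⟨u, w, hw⟩ := h
  have hu : G.Reachable v u := (ConnectedComponent.exact u.2).symm
  obtain ⟨p⟩ := hu
  let w' : G.Walk u u := w.map (Embedding.induce _).toHom
  have hlen : w'.length = w.length := Walk.length_map _ w
  have hw' : Odd w'.length := hlen ▸ Nat.not_even_iff_odd.1 hw
  refine ⟨p.append (w'.append p.reverse), ?_⟩
  simp only [Walk.length_append, Walk.length_reverse]
  obtain ⟨k, hk⟩ := hw'
  exact ⟨p.length + k, by omega⟩

/-- Without bipartite components containing an edge, the degree form is dominated by the signless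
Laplacian form. -/
lemma exists_degForm_le (h : ¬ ∃ C : G.ConnectedComponent,
      (G.induce C.supp).Colorable 2 ∧ (G.induce C.supp).edgeSet.Nonempty) :
    ∃ K : ℝ, 0 ≤ K ∧ ∀ x, degForm G x ≤ K * signlessForm G x := by
  classical
  have key : ∀ v, ∃ K : ℝ, 0 ≤ K ∧ ∀ x, (G.degree v : ℝ) * x v ^ 2 ≤ K * signlessForm G x := by
    intro v
    by_cases hv : ∃ w, G.Adj v w
    · obtain ⟨u, hu⟩ := hv
      have hc : ¬ (G.induce (G.connectedComponentMk v).supp).Colorable 2 := by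
        intro hcol
        refine h ⟨_, hcol, ?_⟩
        refine ⟨s(⟨v, rfl⟩, ⟨u, ?_⟩), ?_⟩
        · exact ConnectedComponent.sound hu.symm.reachable
        · simpa using hu
      obtain ⟨w, hw⟩ := exists_odd_walk G v hc
      refine ⟨G.degree v * w.length ^ 2, by positivity, fun x => ?_⟩
      rw [mul_assoc]
      exact mul_le_mul_of_nonneg_left (sq_le_of_odd_walk G x w hw) (by positivity)
    · have h0 : G.degree v = 0 := by
        by_contra hd
        exact hv ((G.degree_pos_iff_exists_adj v).1 (Nat.pos_of_ne_zero hd))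
      exact ⟨0, le_rfl, fun x => by simp [h0]⟩
  choose K hK0 hK using key
  refine ⟨∑ v, K v, Finset.sum_nonneg fun v _ => hK0 v, fun x => ?_⟩
  rw [degForm, Finset.sum_mul]
  exact Finset.sum_le_sum fun v _ => by convert hK v x

/-- The signed indicator vector of a bipartite component witnesses that the signless Laplacian is
singular. -/
lemma exists_signlessForm_eq_zero (C : G.ConnectedComponent)
    (hcol : (G.induce C.supp).Colorable 2) (hedge : (G.induce C.supp).edgeSet.Nonempty) :
    ∃ x, signlessForm G x = 0 ∧ 0 < degForm G x := by
  classical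
  obtain ⟨c⟩ := hcol
  let x : V → ℝ := fun v => if hv : v ∈ C.supp then (-1) ^ (c ⟨v, hv⟩ : ℕ) else 0
  refine ⟨x, ?_, ?_⟩
  · rw [signlessForm]
    refine div_eq_zero_iff.2 (Or.inl ?_)
    refine Finset.sum_eq_zero fun i _ => Finset.sum_eq_zero fun j _ => ?_
    split_ifs with hij
    · have hmem : i ∈ C.supp ↔ j ∈ C.supp := C.mem_supp_congr_adj hij
      by_cases hi : i ∈ C.supp
      · have hj := hmem.1 hi
        have hne : c ⟨i, hi⟩ ≠ c ⟨j, hj⟩ := c.valid (by simpa using hij)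
        simp only [x, hi, hj, dif_pos]
        generalize c ⟨i, hi⟩ = a at *
        generalize c ⟨j, hj⟩ = b at *
        fin_cases a <;> fin_cases b <;> simp_all
      · have hj : j ∉ C.supp := fun hj => hi (hmem.2 hj)
        simp only [x, hi, hj, dif_neg, not_false_eq_true]
        norm_num
    · rfl
  · obtain ⟨e, he⟩ := hedge
    induction e using Sym2.ind with
    | _ a b =>
      have hab : G.Adj a b := by simpa using he
      rw [degForm]
      refine Finset.sum_pos' (fun i _ => by positivity) ⟨a, Finset.mem_univ _, ?_⟩
      have hd : 0 < G.degree (a : V) := (G.degree_pos_iff_exists_adj _).2 ⟨b, hab⟩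
      have hx : x a ≠ 0 := by
        simp [x, (C.mem_supp_iff _).1 a.2]
      positivity

end

open scoped Classical in
/-- For a graph with at least one edge, α₀(G) = 1/2 if and only if
some connected component induces a bipartite subgraph containing an edge. -/
theorem stmt_9 {V : Type*} [Fintype V] (G : SimpleGraph V) (hedge : G.edgeSet.Nonempty) :
    alpha0 G = 1 / 2 ↔
      ∃ C : G.ConnectedComponent,
        (G.induce C.supp).Colorable 2 ∧ (G.induce C.supp).edgeSet.Nonempty := by
  constructor
  · intro hα
    by_contra hC
    obtain ⟨K, hK0, hK⟩ := exists_degForm_le G hC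
    -- Positivity at `α = 1/2 - ε` needs `2 ε S ≤ (1/2 + ε) R`, which follows from `S ≤ K R` and
    -- `4 ε (K + 1) = 1`.
    set ε : ℝ := 1 / (4 * (K + 1)) with hε
    have hεpos : 0 < ε := by positivity
    have hεK : 4 * ε * (K + 1) = 1 := by rw [hε]; field_simp
    have hmem : (1 / 2 - ε) ∈ {α : ℝ | α ∈ Set.Icc (0:ℝ) 1 ∧ (Amix G α).PosSemidef} := by
      refine ⟨⟨by nlinarith, by linarith⟩, (posSemidef_Amix_iff G _).2 fun x => ?_⟩
      have h1 := mul_le_mul_of_nonneg_left (hK x) hεpos.le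
      have h2 := mul_nonneg hεpos.le (signlessForm_nonneg G x)
      have h3 : 4 * (ε * (K * signlessForm G x)) = signlessForm G x - 4 * (ε * signlessForm G x) := by
        linear_combination signlessForm G x * hεK
      nlinarith
    have hle : alpha0 G ≤ 1 / 2 - ε := csInf_le ⟨0, fun α h => h.1.1⟩ hmem
    linarith
  · rintro ⟨C, hcol, hne⟩
    obtain ⟨x, hR, hS⟩ := exists_signlessForm_eq_zero G C hcol hne
    have hset : {α : ℝ | α ∈ Set.Icc (0:ℝ) 1 ∧ (Amix G α).PosSemidef} = Set.Icc (1 / 2) 1 := by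
      ext α
      simp only [Set.mem_ofPred_eq, Set.mem_Icc, posSemidef_Amix_iff]
      constructor
      · rintro ⟨⟨_, h1⟩, h⟩
        have hx := h x
        rw [hR, mul_zero, add_zero] at hx
        exact ⟨by linarith [nonneg_of_mul_nonneg_left hx hS], h1⟩
      · rintro ⟨h0, h1⟩
        refine ⟨⟨by linarith, h1⟩, fun y => ?_⟩
        have hS' := degForm_nonneg G y
        have hR' := signlessForm_nonneg G y
        exact add_nonneg (mul_nonneg (by linarith) hS') (mul_nonneg (by linarith) hR')
    rw [alpha0, hset, csInf_Icc (by norm_num)]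
end

section
/- Let G be a simple graph on n ≥ 3 vertices such that no connected component of G induces a bipartite subgraph (in particular every component is non-bipartite and contains an edge), and let Q(G) = D(G) + A(G). Then α₀(G) ≤ −λ_min(A(G)) / (λ_min(Q(G)) − 2·λ_min(A(G))) and α₀(G) < √(⌊n/2⌋·⌈n/2⌉) / (1/(12n²) + 2·√(⌊n/2⌋·⌈n/2⌉)). -/
/-!
Write `q` and `l` for the smallest eigenvalues of `Q = D + A` and of `A`. For `α ≤ 1/2` the
identity `A_α = α Q + (1 - 2α) A` and the Rayleigh bounds for `Q` and `A` show that `A_α` is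
positive semidefinite as soon as `α q + (1 - 2α) l ≥ 0`. The value `α = -l / (q - 2l)` makes this
an equality, which is the first inequality.

Since `l / (2l - q)` increases with `-l` and strictly decreases with `q`, the second inequality
follows from two estimates.
* `-l ≤ √(⌊n/2⌋⌈n/2⌉)` (`neg_adjM_form_le`): only edges between the nonnegative and the negative
  entries of a vector contribute negatively to the form of `A`; there are `p` and `n - p` such
  entries, and Cauchy–Schwarz gives `√(p (n - p))`.
* `q ≥ 1/(2n²)` (`le_signless_form`): let `v` maximise `|x|`. As the component of `v` is not
  bipartite, the bipartite double cover has a path between the two lifts of `v`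
  (`reachable_lifts`). The function equal to `x` on one sheet and `-x` on the other changes by
  `2 x v` along this path, its increments are the sums `x u + x w` over edges, and the path has
  fewer than `2n` edges, all distinct, so Cauchy–Schwarz (`path_sq_le`) bounds `x v ^ 2` by a
  multiple of the form of `Q`, which is the sum of `(x u + x w)²` over the edges.
-/

open Matrix SimpleGraph

/-! ### Rayleigh bounds for the smallest eigenvalue -/

section Rayleigh

variable {V : Type*} [Fintype V]

/-- `M - λ_min` is a unitary conjugate of a nonnegative diagonal matrix. -/
lemma lambdaMin_mul_le {M : Matrix V V ℝ} (hM : M.IsHermitian) (x : V → ℝ) :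
    lambdaMin M * (x ⬝ᵥ x) ≤ x ⬝ᵥ (M *ᵥ x) := by
  classical
  have hmin : ∀ i, lambdaMin M ≤ hM.eigenvalues i := by
    intro i
    unfold lambdaMin
    rw [dif_pos hM]
    exact ciInf_le (Set.finite_range _).bddBelow i
  set c := lambdaMin M
  set U : Matrix V V ℝ := hM.eigenvectorUnitary.1 with hU
  have hUU : U * Uᴴ = 1 := by
    rw [← star_eq_conjTranspose]; exact Unitary.coe_mul_star_self _
  have hspec : M - c • (1 : Matrix V V ℝ)
      = U * diagonal (fun i => hM.eigenvalues i - c) * Uᴴ := by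
    have h1 : diagonal (fun i => hM.eigenvalues i - c)
        = diagonal hM.eigenvalues - c • (1 : Matrix V V ℝ) := by
      ext i j
      by_cases h : i = j <;> simp [h]
    have h2 : M = U * diagonal hM.eigenvalues * Uᴴ := by
      conv_lhs => rw [hM.spectral_theorem]
      simp [Unitary.conjStarAlgAut_apply, star_eq_conjTranspose, hU]
    rw [h1, mul_sub, sub_mul, ← h2, mul_smul_comm, smul_mul_assoc, mul_one, hUU]
  have hpsd : (M - c • (1 : Matrix V V ℝ)).PosSemidef := by
    rw [hspec]
    exact (PosSemidef.diagonal fun i => sub_nonneg.2 (hmin i)).mul_mul_conjTranspose_same U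
  have := hpsd.dotProduct_mulVec_nonneg x
  simp only [star_trivial, sub_mulVec, smul_mulVec, one_mulVec, dotProduct_sub, dotProduct_smul,
    smul_eq_mul] at this
  linarith

lemma le_lambdaMin [Nonempty V] {M : Matrix V V ℝ} (hM : M.IsHermitian) {c : ℝ}
    (h : ∀ x : V → ℝ, c * (x ⬝ᵥ x) ≤ x ⬝ᵥ (M *ᵥ x)) : c ≤ lambdaMin M := by
  classical
  unfold lambdaMin
  rw [dif_pos hM]
  refine le_ciInf fun i => ?_
  set v : V → ℝ := ⇑(hM.eigenvectorBasis i) with hv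
  have hvv : v ⬝ᵥ v = 1 := by
    have h1 := hM.eigenvectorBasis.orthonormal.1 i
    rw [EuclideanSpace.norm_eq, Real.sqrt_eq_one] at h1
    simpa [dotProduct, hv, sq] using h1
  have h2 := h v
  rw [hv, hM.mulVec_eigenvectorBasis, ← hv, dotProduct_smul, hvv] at h2
  simpa using h2

end Rayleigh

/-! ### The quadratic forms of `A` and `Q` -/

section Forms

variable {V : Type*} [Fintype V] (G : SimpleGraph V)

lemma isHermitian_adjM : (adjM G).IsHermitian := by
  classical
  exact G.isHermitian_adjMatrix ℝ

lemma isHermitian_degM : (degM G).IsHermitian := by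
  classical
  exact isHermitian_diagonal _

lemma adjM_form [DecidableRel G.Adj] (x : V → ℝ) :
    x ⬝ᵥ (adjM G *ᵥ x) = ∑ u, ∑ v, if G.Adj u v then x u * x v else 0 := by
  have h : adjM G = G.adjMatrix ℝ := by
    unfold adjM
    congr!
  rw [h, dotProduct_mulVec_adjMatrix]

lemma degM_form [DecidableRel G.Adj] (x : V → ℝ) :
    x ⬝ᵥ (degM G *ᵥ x) = ∑ u, ∑ v, if G.Adj u v then x u * x u else 0 := by
  classical
  simp only [degM, dotProduct, mulVec_diagonal]
  refine Finset.sum_congr rfl fun u _ => ?_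
  rw [← Finset.sum_filter, Finset.sum_const, nsmul_eq_mul, ← neighborFinset_eq_filter,
    card_neighborFinset_eq_degree]
  rw [mul_left_comm]
  congr!

lemma signless_form [DecidableRel G.Adj] (x : V → ℝ) :
    2 * (x ⬝ᵥ ((degM G + adjM G) *ᵥ x))
      = ∑ u, ∑ v, if G.Adj u v then (x u + x v) ^ 2 else 0 := by
  rw [add_mulVec, dotProduct_add, two_mul]
  have hswap : x ⬝ᵥ (degM G *ᵥ x) = ∑ u, ∑ v, if G.Adj u v then x v * x v else 0 := by
    rw [degM_form, Finset.sum_comm]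
    simp only [G.adj_comm]
  nth_rewrite 2 [hswap]
  rw [degM_form, adjM_form]
  simp only [← Finset.sum_add_distrib]
  refine Finset.sum_congr rfl fun u _ => Finset.sum_congr rfl fun v _ => ?_
  split_ifs <;> ring

end Forms

/-! ### The bound on the smallest adjacency eigenvalue -/

section Adjacency

variable {V : Type*} [Fintype V]

lemma mul_le_floor_mul_ceil (p q : ℕ) : p * q ≤ ((p + q) / 2) * ((p + q + 1) / 2) := by
  rcases Nat.even_or_odd' (p + q) with ⟨k, hk | hk⟩
  · have h1 : (p + q) / 2 = k := by omega
    have h2 : (p + q + 1) / 2 = k := by omega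
    rw [h1, h2]
    zify at *
    nlinarith [sq_nonneg ((p : ℤ) - q)]
  · have h1 : (p + q) / 2 = k := by omega
    have h2 : (p + q + 1) / 2 = k + 1 := by omega
    rw [h1, h2]
    rcases le_or_gt p k with h | h
    · obtain ⟨d, rfl⟩ := Nat.exists_eq_add_of_le h
      obtain rfl : q = p + d + d + 1 := by omega
      nlinarith
    · obtain ⟨d, rfl⟩ := Nat.exists_eq_add_of_le h
      have : q + d = k := by omega
      subst this
      nlinarith

/-- Only the edges joining a nonnegative entry of `x` to a negative one contribute negatively to
the quadratic form of `A`; Cauchy–Schwarz on both sides bounds their contribution. -/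
lemma neg_adjM_form_le (G : SimpleGraph V) (x : V → ℝ) :
    -Real.sqrt ((Fintype.card V / 2 : ℕ) * ((Fintype.card V + 1) / 2 : ℕ)) * (x ⬝ᵥ x)
      ≤ x ⬝ᵥ (adjM G *ᵥ x) := by
  classical
  set P := Finset.univ.filter fun v => 0 ≤ x v with hP
  set N := Finset.univ.filter fun v => ¬ 0 ≤ x v with hN
  set s := Real.sqrt ((Fintype.card V / 2 : ℕ) * ((Fintype.card V + 1) / 2 : ℕ)) with hs
  set a := ∑ u ∈ P, x u with ha
  set b := ∑ u ∈ N, -x u with hb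
  have hcard : P.card + N.card = Fintype.card V :=
    Finset.card_filter_add_card_filter_not _
  have hxx : x ⬝ᵥ x = ∑ u ∈ P, x u ^ 2 + ∑ u ∈ N, (-x u) ^ 2 := by
    simp only [dotProduct, neg_sq, ← sq]
    exact (Finset.sum_filter_add_sum_filter_not _ _ _).symm
  have ha0 : 0 ≤ a := Finset.sum_nonneg fun u hu => (Finset.mem_filter.1 hu).2
  have hb0 : 0 ≤ b := Finset.sum_nonneg fun u hu => by
    have := (Finset.mem_filter.1 hu).2
    linarith
  have ha2 : a ^ 2 ≤ P.card * ∑ u ∈ P, x u ^ 2 := sq_sum_le_card_mul_sum_sq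
  have hb2 : b ^ 2 ≤ N.card * ∑ u ∈ N, (-x u) ^ 2 := sq_sum_le_card_mul_sum_sq
  set S := ∑ u ∈ P, x u ^ 2
  set T := ∑ u ∈ N, (-x u) ^ 2
  have hS : 0 ≤ S := Finset.sum_nonneg fun _ _ => sq_nonneg _
  have hT : 0 ≤ T := Finset.sum_nonneg fun _ _ => sq_nonneg _
  have hs2 : (P.card : ℝ) * N.card ≤ s ^ 2 := by
    rw [hs, Real.sq_sqrt (by positivity), ← hcard]
    exact_mod_cast mul_le_floor_mul_ceil _ _
  have hab : 2 * (a * b) ≤ s * (S + T) := by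
    refine abs_le_of_sq_le_sq' ?_ (by positivity) |>.2
    calc (2 * (a * b)) ^ 2 = 4 * (a ^ 2 * b ^ 2) := by ring
      _ ≤ 4 * ((P.card * S) * (N.card * T)) := by gcongr
      _ = (P.card * N.card) * (4 * (S * T)) := by ring
      _ ≤ s ^ 2 * (S + T) ^ 2 := by
          gcongr
          nlinarith [sq_nonneg (S - T)]
      _ = (s * (S + T)) ^ 2 := by ring
  -- `x u * x v ≥ -(x⁺ u * x⁻ v + x⁻ u * x⁺ v)`, and the right side is nonpositive, so the
  -- comparison also holds at nonadjacent pairs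
  have hform : -(2 * (a * b)) ≤ x ⬝ᵥ (adjM G *ᵥ x) := by
    have ha' : a = ∑ u, if 0 ≤ x u then x u else 0 := Finset.sum_filter _ _
    have hb' : b = ∑ u, if 0 ≤ x u then 0 else -x u := by
      rw [hb, hN, Finset.sum_filter]
      simp only [ite_not]
    have hexp : -(2 * (a * b)) = ∑ u, ∑ v,
        (-((if 0 ≤ x u then x u else 0) * (if 0 ≤ x v then 0 else -x v))
          - (if 0 ≤ x u then 0 else -x u) * (if 0 ≤ x v then x v else 0)) := by
      simp only [Finset.sum_sub_distrib, Finset.sum_neg_distrib, ← Finset.mul_sum,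
        ← Finset.sum_mul, ← ha', ← hb']
      ring
    rw [hexp, adjM_form]
    refine Finset.sum_le_sum fun u _ => Finset.sum_le_sum fun v _ => ?_
    split_ifs <;> nlinarith
  rw [hxx]
  linarith

/-- Testing the form of `A` on `e_u - e_v` for an edge `uv`. -/
lemma lambdaMin_adjM_neg {G : SimpleGraph V} {u v : V} (huv : G.Adj u v) :
    lambdaMin (adjM G) < 0 := by
  classical
  have h := lambdaMin_mul_le (isHermitian_adjM G) (Pi.single u 1 - Pi.single v 1)
  have hne := huv.ne
  change lambdaMin (adjM G) * _ ≤ _ ⬝ᵥ (G.adjMatrix ℝ *ᵥ _) at h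
  simp [mulVec_sub, sub_dotProduct, dotProduct_sub, huv, huv.symm, hne, hne.symm] at h
  linarith

end Adjacency

/-! ### The bound on the smallest signless Laplacian eigenvalue -/

section Signless

/-- Cauchy–Schwarz along a path: a path traverses each dart at most once. -/
lemma path_sq_le {W : Type*} [Fintype W] {H : SimpleGraph W} [DecidableRel H.Adj] (y : W → ℝ)
    {a b : W} (p : H.Walk a b) (hp : p.IsPath) :
    (y a - y b) ^ 2 ≤ Fintype.card W *
      ∑ u, ∑ v, if H.Adj u v then (y u - y v) ^ 2 else 0 := by
  classical
  have htel : ∀ {a b : W} (p : H.Walk a b),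
      y a - y b = (p.darts.map fun d => y d.fst - y d.snd).sum := by
    intro a b p
    induction p with
    | nil => simp
    | cons h p ih => simp [← ih]
  have hnd : p.darts.Nodup := Walk.darts_nodup_of_support_nodup hp.support_nodup
  rw [htel p, ← List.sum_toFinset _ hnd]
  refine sq_sum_le_card_mul_sum_sq.trans ?_
  have hcard : (p.darts.toFinset.card : ℝ) ≤ Fintype.card W := by
    rw [List.toFinset_card_of_nodup hnd, Walk.length_darts]
    exact_mod_cast hp.length_lt.le
  have hsum : ∑ d ∈ p.darts.toFinset, (y d.fst - y d.snd) ^ 2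
      ≤ ∑ u, ∑ v, if H.Adj u v then (y u - y v) ^ 2 else 0 := by
    rw [← Finset.sum_product', Finset.univ_product_univ]
    calc ∑ d ∈ p.darts.toFinset, (y d.fst - y d.snd) ^ 2
        = ∑ d ∈ p.darts.toFinset, if H.Adj d.toProd.1 d.toProd.2
            then (y d.toProd.1 - y d.toProd.2) ^ 2 else 0 :=
          Finset.sum_congr rfl fun d _ => by rw [if_pos d.adj]
      _ = ∑ e ∈ p.darts.toFinset.image Dart.toProd,
            if H.Adj e.1 e.2 then (y e.1 - y e.2) ^ 2 else 0 :=
          (Finset.sum_image (f := fun e : W × W => if H.Adj e.1 e.2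
            then (y e.1 - y e.2) ^ 2 else 0) (Dart.toProd_injective.injOn)).symm
      _ ≤ _ := by
          refine Finset.sum_le_sum_of_subset_of_nonneg (Finset.subset_univ _) fun e _ _ => ?_
          split_ifs <;> positivity
  gcongr

variable {V : Type*}

/-- Exchanging the two sheets is an automorphism of the double cover. -/
lemma reachable_swap {G : SimpleGraph V} {a b : V ⊕ V} (h : G.bipartiteDoubleCover.Reachable a b) :
    G.bipartiteDoubleCover.Reachable a.swap b.swap := by
  let f : G.bipartiteDoubleCover →g G.bipartiteDoubleCover :=
    ⟨Sum.swap, by rintro (u | u) (v | v) h <;> simp_all⟩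
  exact h.map f

/-- In a non-bipartite component the two lifts of a vertex are joined in the double cover:
otherwise the sheet reachable from `inl v` would be a proper 2-colouring of the component. -/
lemma reachable_lifts (G : SimpleGraph V) (v : V)
    (hnb : ¬ (G.induce (G.connectedComponentMk v).supp).Colorable 2) :
    G.bipartiteDoubleCover.Reachable (Sum.inl v) (Sum.inr v) := by
  classical
  by_contra hcon
  apply hnb
  have hlift : ∀ {w u : V}, G.Walk w u → G.bipartiteDoubleCover.Reachable (Sum.inl w) (Sum.inl u) ∨
      G.bipartiteDoubleCover.Reachable (Sum.inl w) (Sum.inr u) := by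
    intro w u p
    induction p with
    | nil => exact Or.inl (Reachable.refl _)
    | @cons w z u h p ih =>
      have hwz : G.bipartiteDoubleCover.Reachable (Sum.inl w) (Sum.inr z) :=
        Adj.reachable (by simpa using h)
      rcases ih with h1 | h1
      · exact Or.inr (hwz.trans (reachable_swap h1))
      · exact Or.inl (hwz.trans (reachable_swap h1))
  have hnot : ∀ u, G.bipartiteDoubleCover.Reachable (Sum.inl v) (Sum.inl u) →
      ¬ G.bipartiteDoubleCover.Reachable (Sum.inl v) (Sum.inr u) := fun u h1 h2 =>
    hcon (h2.trans (reachable_swap h1).symm)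
  let C : (G.induce (G.connectedComponentMk v).supp).Coloring Bool :=
    Coloring.mk (fun u => decide (G.bipartiteDoubleCover.Reachable (Sum.inl v) (Sum.inl u.1))) (by
      rintro ⟨u, hu⟩ ⟨w, hw⟩ huw heq
      have huw' : G.Adj u w := by simpa using huw
      have hA : G.bipartiteDoubleCover.Reachable (Sum.inl u) (Sum.inr w) :=
        Adj.reachable (by simpa using huw')
      have heq' : G.bipartiteDoubleCover.Reachable (Sum.inl v) (Sum.inl u) ↔
          G.bipartiteDoubleCover.Reachable (Sum.inl v) (Sum.inl w) := decide_eq_decide.1 heq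
      by_cases h : G.bipartiteDoubleCover.Reachable (Sum.inl v) (Sum.inl u)
      · exact hnot w (heq'.1 h) (h.trans hA)
      · have hvw : G.Reachable v w := (ConnectedComponent.exact hw).symm
        obtain ⟨p⟩ := hvw
        rcases hlift p with h1 | h1
        · exact h (heq'.2 h1)
        · exact h (h1.trans hA.symm))
  simpa using C.colorable

variable [Fintype V]

/-- If `v` maximises `|x|`, Cauchy–Schwarz along a path in the double cover between the two lifts
of `v`, for the function `±x`, bounds `4 * x v ^ 2` by a multiple of the
quadratic form of `Q`. -/
lemma le_signless_form (G : SimpleGraph V) [Nonempty V]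
    (hnbip : ∀ C : G.ConnectedComponent, ¬ (G.induce C.supp).Colorable 2) (x : V → ℝ) :
    1 / (2 * (Fintype.card V : ℝ) ^ 2) * (x ⬝ᵥ x) ≤ x ⬝ᵥ ((degM G + adjM G) *ᵥ x) := by
  classical
  obtain ⟨v, hv⟩ := Finite.exists_max fun v => x v ^ 2
  obtain ⟨p, hp⟩ := (reachable_lifts G v (hnbip _)).exists_isPath
  have h := path_sq_le (Sum.elim x (-x)) p hp
  have hxx : x ⬝ᵥ x ≤ Fintype.card V * x v ^ 2 := by
    calc x ⬝ᵥ x = ∑ u, x u ^ 2 := by simp [dotProduct, sq]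
      _ ≤ ∑ _u : V, x v ^ 2 := Finset.sum_le_sum fun u _ => hv u
      _ = _ := by simp
  have hform := signless_form G x
  have hneg : (∑ u, ∑ v, if G.Adj u v then (-x u - x v) ^ 2 else 0)
      = ∑ u, ∑ v, if G.Adj u v then (x u + x v) ^ 2 else 0 := by
    simp only [show ∀ u v, (-x u - x v) ^ 2 = (x u + x v) ^ 2 from fun u v => by ring]
  simp [Fintype.sum_sum_type, hneg, ← hform] at h
  have hn : (0 : ℝ) < Fintype.card V := by exact_mod_cast Fintype.card_pos
  rw [one_div_mul_eq_div, div_le_iff₀ (by positivity)]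
  set q := x ⬝ᵥ ((degM G + adjM G) *ᵥ x)
  have h' : x v ^ 2 ≤ 2 * Fintype.card V * q := by nlinarith
  nlinarith

end Signless

open scoped Classical in
/-- If G has order n ≥ 3 and no connected component of G induces a
bipartite subgraph, then α₀(G) ≤ −λ_min(A(G)) / (λ_min(Q(G)) − 2·λ_min(A(G))) and
α₀(G) < √(⌊n/2⌋·⌈n/2⌉) / (1/(12n²) + 2·√(⌊n/2⌋·⌈n/2⌉)). -/
theorem stmt_13 {V : Type*} [Fintype V] (G : SimpleGraph V)
    (hnbip : ∀ C : G.ConnectedComponent, ¬ (G.induce C.supp).Colorable 2)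
    (n : ℕ) (hn : n = Fintype.card V) (hn3 : 3 ≤ n) :
    alpha0 G ≤
        -lambdaMin (adjM G) / (lambdaMin (degM G + adjM G) - 2 * lambdaMin (adjM G)) ∧
      alpha0 G <
        Real.sqrt ((n / 2 : ℕ) * ((n + 1) / 2 : ℕ)) /
          (1 / (12 * (n : ℝ) ^ 2) + 2 * Real.sqrt ((n / 2 : ℕ) * ((n + 1) / 2 : ℕ))) := by
  have hne : Nonempty V := Fintype.card_pos_iff.1 (by omega)
  have hHQ : (degM G + adjM G).IsHermitian := (isHermitian_degM G).add (isHermitian_adjM G)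
  have hq := le_lambdaMin hHQ (le_signless_form G hnbip)
  have hl := le_lambdaMin (isHermitian_adjM G) (neg_adjM_form_le G)
  rw [← hn] at hq hl
  have hl0 : lambdaMin (adjM G) < 0 := by
    -- an edgeless graph would have one-colourable components
    have hbot : G ≠ ⊥ := by
      rintro rfl
      obtain ⟨v⟩ := hne
      refine hnbip (connectedComponentMk _ v) ⟨Coloring.mk (fun _ => 0) ?_⟩
      intro u w h
      simp at h
    obtain ⟨u, v, huv⟩ := ne_bot_iff_exists_adj.1 hbot
    exact lambdaMin_adjM_neg huv
  have hn0 : (0 : ℝ) < n := by exact_mod_cast (by omega : 0 < n)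
  have hq1 : 1 / (12 * (n : ℝ) ^ 2) < lambdaMin (degM G + adjM G) := by
    refine lt_of_lt_of_le ?_ hq
    apply one_div_lt_one_div_of_lt <;> nlinarith [pow_pos hn0 2]
  have hc0 : 0 < 1 / (12 * (n : ℝ) ^ 2) := by positivity
  have hA := lambdaMin_mul_le (isHermitian_adjM G)
  have hQ := lambdaMin_mul_le hHQ
  set q := lambdaMin (degM G + adjM G)
  set l := lambdaMin (adjM G)
  set c := 1 / (12 * (n : ℝ) ^ 2)
  set s := Real.sqrt ((n / 2 : ℕ) * ((n + 1) / 2 : ℕ))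
  have hden : 0 < q - 2 * l := by linarith
  set α := -l / (q - 2 * l) with hα
  have hα0 : 0 ≤ α := div_nonneg (by linarith) hden.le
  have hα1 : α ≤ 1 / 2 := by
    rw [hα, div_le_iff₀ hden]; linarith
  have hαeq : α * (q - 2 * l) = -l := div_mul_cancel₀ _ hden.ne'
  have hle : alpha0 G ≤ α := by
    refine csInf_le ⟨0, fun _ h => h.1.1⟩ ⟨⟨hα0, by linarith⟩, ?_⟩
    -- `A_α = α Q + (1 - 2α) A`, and `α` solves `α q + (1 - 2α) l = 0`
    have hmix : Amix G α = α • (degM G + adjM G) + (1 - 2 * α) • adjM G := by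
      unfold Amix; module
    rw [hmix]
    refine .of_dotProduct_mulVec_nonneg
      ((hHQ.smul (.all α)).add ((isHermitian_adjM G).smul (.all _))) fun x => ?_
    simp only [star_trivial, add_mulVec _ _ x, smul_mulVec _ _ x, dotProduct_add, dotProduct_smul,
      smul_eq_mul]
    have h1 := mul_le_mul_of_nonneg_left (hQ x) hα0
    have h2 := mul_le_mul_of_nonneg_left (hA x) (by linarith : 0 ≤ 1 - 2 * α)
    simp only [add_mulVec, dotProduct_add] at h1
    have h3 : α * (q * (x ⬝ᵥ x)) + (1 - 2 * α) * (l * (x ⬝ᵥ x)) = 0 := by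
      linear_combination (x ⬝ᵥ x) * hαeq
    linarith
  refine ⟨hle, hle.trans_lt ?_⟩
  rw [hα, div_lt_div_iff₀ hden (by linarith)]
  nlinarith
end
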